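/- Let m ≥ 1 be an integer, let H_0, …, H_m be real Hilbert spaces with H_m = H_0, for each n ∈ {1,…,m} let U_n : H_{n−1} → H_n be a bounded linear operator and Q_n : H_n → H_n a firmly nonexpansive operator. Define θ_0 = 1 and θ_n = Σ_{i=1}^n θ_{i−1} ‖U_n ∘ ⋯ ∘ U_i‖ for n = 1, …, m, and set U = U_m ∘ ⋯ ∘ U_1. Let α ∈ [1/2, 1]. If ‖U − 2^m (1 − α) Id‖ − ‖U‖ + 2 θ_m ≤ 2^m α, then S = Q_m ∘ U_m ∘ ⋯ ∘ Q_1 ∘ U_1 is α-averaged. -/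

import Mathlib

/-!
Write each firmly nonexpansive `Q n` as `(Id + R n) / 2` with `R n` nonexpansive. For two
inputs let `d n` be the difference of the two network outputs after `n` layers and `r (n + 1)` the
difference of the two values of `R (n + 1)`. Then `2 ^ (n+1) d (n+1) = U n (2 ^ n d n) + 2 ^ n r (n+1)`, so
`E n := 2 ^ n d n - U_n ⋯ U_1 d 0` is a sum of terms `U_n ⋯ U_{i+1} (2 ^ (i-1) r i)`, `1 ≤ i ≤ n`.

Nonexpansiveness of `R i` together with the recursion defining `θ` gives
`2 ^ (i-1) ‖r i‖ ≤ θ i ‖d 0‖` by induction, hence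
`‖E m‖ ≤ (∑_{i=1}^m θ i ‖U_m ⋯ U_{i+1}‖) ‖d 0‖ = (2 θ m - ‖U‖) ‖d 0‖`
(lemma `norm_chainComp_chainErr_le`). By the triangle inequality and the hypothesis on `α`,
`2 ^ m ‖d m - (1 - α) d 0‖ ≤ (‖U - 2 ^ m (1 - α) Id‖ + 2 θ m - ‖U‖) ‖d 0‖ ≤ 2 ^ m α ‖d 0‖`,
which says that `(S - (1 - α) Id) / α` is nonexpansive.
-/

noncomputable section

open Finset

/-- The composition `U_{i+k-1} ∘ ⋯ ∘ U_i : H i →L H (i+k)` of `k` consecutive links of the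
chain of operators `U n : H n →L H (n+1)` (the identity when `k = 0`). -/
def chainComp {H : ℕ → Type*} [∀ n, NormedAddCommGroup (H n)] [∀ n, NormedSpace ℝ (H n)]
    (U : ∀ n, H n →L[ℝ] H (n + 1)) : ∀ (i k : ℕ), H i →L[ℝ] H (i + k)
  | _, 0 => ContinuousLinearMap.id ℝ _
  | i, k + 1 => (U (i + k)).comp (chainComp U i k)

/-- The full composition `U_n ∘ ⋯ ∘ U_1 : H 0 →L H n`. -/
def chainFull {H : ℕ → Type*} [∀ n, NormedAddCommGroup (H n)] [∀ n, NormedSpace ℝ (H n)]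
    (U : ∀ n, H n →L[ℝ] H (n + 1)) : ∀ n, H 0 →L[ℝ] H n
  | 0 => ContinuousLinearMap.id ℝ _
  | n + 1 => (U n).comp (chainFull U n)

/-- The network `Q_k ∘ U_k ∘ ⋯ ∘ Q_1 ∘ U_1 : H 0 → H k`. -/
def chainNet {H : ℕ → Type*} [∀ n, NormedAddCommGroup (H n)] [∀ n, NormedSpace ℝ (H n)]
    (U : ∀ n, H n →L[ℝ] H (n + 1)) (Q : ∀ n, H n → H n) : ∀ k, H 0 → H k
  | 0 => id
  | k + 1 => fun z => Q (k + 1) (U k (chainNet U Q k z))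

section Chain

lemma norm_eq_of_heq {H : ℕ → Type*} [∀ n, NormedAddCommGroup (H n)]
    {a b : ℕ} (h : a = b) {x : H a} {y : H b} (hxy : HEq x y) : ‖x‖ = ‖y‖ := by
  subst h; rw [eq_of_heq hxy]

variable {H : ℕ → Type*} [∀ n, NormedAddCommGroup (H n)] [∀ n, NormedSpace ℝ (H n)]

lemma heq_apply (U : ∀ n, H n →L[ℝ] H (n + 1)) {a b : ℕ} (h : a = b) {x : H a} {y : H b}
    (hxy : HEq x y) : HEq (U a x) (U b y) := by
  subst h; rw [eq_of_heq hxy]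

/-- Peeling off the first link of a chain; the two sides live in the propositionally equal spaces
`H (n + 1 + k)` and `H (n + (k + 1))`. -/
lemma chainComp_succ_heq (U : ∀ n, H n →L[ℝ] H (n + 1)) (n k : ℕ) (v : H n) :
    HEq (chainComp U (n + 1) k (U n v)) (chainComp U n (k + 1) v) := by
  induction k with
  | zero => exact HEq.rfl
  | succ k ih => exact heq_apply U (by omega) ih

lemma norm_chainComp_succ (U : ∀ n, H n →L[ℝ] H (n + 1)) (n k : ℕ) (v : H n) :
    ‖chainComp U (n + 1) k (U n v)‖ = ‖chainComp U n (k + 1) v‖ :=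
  norm_eq_of_heq (by omega) (chainComp_succ_heq U n k v)

lemma chainComp_zero_heq (U : ∀ n, H n →L[ℝ] H (n + 1)) (n : ℕ) (v : H 0) :
    HEq (chainComp U 0 n v) (chainFull U n v) := by
  induction n with
  | zero => exact HEq.rfl
  | succ k ih => exact heq_apply U (by omega) ih

lemma norm_chainFull (U : ∀ n, H n →L[ℝ] H (n + 1)) (n : ℕ) :
    ‖chainFull U n‖ = ‖chainComp U 0 n‖ := by
  have h (v : H 0) : ‖chainComp U 0 n v‖ = ‖chainFull U n v‖ :=
    norm_eq_of_heq (by omega) (chainComp_zero_heq U n v)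
  apply le_antisymm
  · exact ContinuousLinearMap.opNorm_le_bound _ (norm_nonneg _) fun v => by
      rw [← h]; exact ContinuousLinearMap.le_opNorm _ _
  · exact ContinuousLinearMap.opNorm_le_bound _ (norm_nonneg _) fun v => by
      rw [h]; exact ContinuousLinearMap.le_opNorm _ _

/-- The deviation `E n = 2 ^ n d n - U_n ⋯ U_1 d 0` of the rescaled network difference from its
linear part, for the inputs `x` and `y`. -/
def chainErr (U : ∀ n, H n →L[ℝ] H (n + 1)) (Q : ∀ n, H n → H n) (x y : H 0) (n : ℕ) : H n :=
  (2 ^ n : ℝ) • (chainNet U Q n x - chainNet U Q n y) - chainFull U n (x - y)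

/-- The recursion for `θ` with the sum indexed from zero and its first term split off. -/
lemma theta_succ (U : ∀ n, H n →L[ℝ] H (n + 1)) {m : ℕ} {θ : ℕ → ℝ} (hθ0 : θ 0 = 1)
    (hθ : ∀ n, 1 ≤ n → n ≤ m →
      θ n = ∑ i ∈ Finset.Icc 1 n, θ (i - 1) * ‖chainComp U (i - 1) (n - (i - 1))‖)
    {n : ℕ} (hn : n + 1 ≤ m) :
    θ (n + 1) = ‖chainComp U 0 (n + 1)‖ +
      ∑ j ∈ Finset.range n, θ (j + 1) * ‖chainComp U (j + 1) (n + 1 - (j + 1))‖ := by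
  rw [hθ (n + 1) (by omega) hn, ← Finset.Ico_add_one_right_eq_Icc, Finset.sum_Ico_eq_sum_range,
    show n + 1 + 1 - 1 = n + 1 by omega, Finset.sum_range_succ', add_comm]
  congr 1
  · simp [hθ0]
  · refine Finset.sum_congr rfl fun j _ => ?_
    rw [show 1 + (j + 1) - 1 = j + 1 by omega]

end Chain

section Network

variable {H : ℕ → Type*} [∀ n, NormedAddCommGroup (H n)] [∀ n, InnerProductSpace ℝ (H n)]

/-- The reflection `2 Q - Id` of a firmly nonexpansive `Q` is nonexpansive, in terms of the
differences `p = Q x - Q y` and `u = x - y`. -/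
lemma norm_two_smul_sub_le {E : Type*} [NormedAddCommGroup E] [InnerProductSpace ℝ E] {p u : E}
    (h : ‖p‖ ^ 2 + ‖u - p‖ ^ 2 ≤ ‖u‖ ^ 2) : ‖(2 : ℝ) • p - u‖ ≤ ‖u‖ := by
  have h1 := parallelogram_law_with_norm ℝ p (u - p)
  rw [show p + (u - p) = u by abel, show p - (u - p) = (2 : ℝ) • p - u by rw [two_smul]; abel] at h1
  exact le_of_sq_le_sq (by nlinarith) (norm_nonneg _)

/-- The bound on the deviation `chainErr`, pushed through the next `k` linear links. The extra
links make the induction on `n` close: the step uses both `k + 1` and `1` further links. -/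
lemma norm_chainComp_chainErr_le (U : ∀ n, H n →L[ℝ] H (n + 1)) (Q : ∀ n, H n → H n) {m : ℕ}
    (hQ : ∀ n, 1 ≤ n → n ≤ m → ∀ x y : H n,
      ‖Q n x - Q n y‖ ^ 2 + ‖(x - Q n x) - (y - Q n y)‖ ^ 2 ≤ ‖x - y‖ ^ 2)
    {θ : ℕ → ℝ} (hθ0 : θ 0 = 1)
    (hθ : ∀ n, 1 ≤ n → n ≤ m →
      θ n = ∑ i ∈ Finset.Icc 1 n, θ (i - 1) * ‖chainComp U (i - 1) (n - (i - 1))‖)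
    (z z' : H 0) (n : ℕ) (hn : n ≤ m) (k : ℕ) :
    ‖chainComp U n k (chainErr U Q z z' n)‖ ≤
      (∑ j ∈ Finset.range n, θ (j + 1) * ‖chainComp U (j + 1) (n + k - (j + 1))‖) * ‖z - z'‖ := by
  induction n generalizing k with
  | zero => simp [chainErr, chainNet, chainFull]
  | succ n ih =>
    have ih := ih (by omega)
    set x := U n (chainNet U Q n z) with hx
    set y := U n (chainNet U Q n z') with hy
    set r : H (n + 1) := (2 : ℝ) • (Q (n + 1) x - Q (n + 1) y) - (x - y) with hr
    have hrxy : ‖r‖ ≤ ‖x - y‖ := by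
      apply norm_two_smul_sub_le
      have := hQ (n + 1) (by omega) hn x y
      rwa [sub_sub_sub_comm] at this
    have hxy : (2 ^ n : ℝ) • (x - y) =
        chainFull U (n + 1) (z - z') + U n (chainErr U Q z z' n) := by
      simp [chainErr, chainFull, hx, hy]
    have hE : chainErr U Q z z' (n + 1) = U n (chainErr U Q z z' n) + (2 ^ n : ℝ) • r := by
      have h2 : chainErr U Q z z' (n + 1) =
          (2 ^ (n + 1) : ℝ) • (Q (n + 1) x - Q (n + 1) y) - chainFull U (n + 1) (z - z') := rfl
      rw [h2, hr, smul_sub _ _ (x - y), hxy, smul_smul, pow_succ]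
      abel
    have hrθ : ‖(2 ^ n : ℝ) • r‖ ≤ θ (n + 1) * ‖z - z'‖ := by
      calc ‖(2 ^ n : ℝ) • r‖ ≤ ‖(2 ^ n : ℝ) • (x - y)‖ := by
            rw [norm_smul, norm_smul]; gcongr
        _ ≤ ‖chainFull U (n + 1) (z - z')‖ + ‖U n (chainErr U Q z z' n)‖ := by
            rw [hxy]; exact norm_add_le _ _
        _ ≤ _ := by
            rw [theta_succ U hθ0 hθ hn, add_mul, ← norm_chainFull]
            exact add_le_add (ContinuousLinearMap.le_opNorm _ _) (ih 1)
    rw [hE, map_add, Finset.sum_range_succ, add_mul]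
    refine (norm_add_le _ _).trans (add_le_add ?_ ?_)
    · rw [norm_chainComp_succ, show n + 1 + k = n + (k + 1) by omega]
      exact ih (k + 1)
    · rw [show n + 1 + k - (n + 1) = k by omega]
      calc _ ≤ ‖chainComp U (n + 1) k‖ * ‖(2 ^ n : ℝ) • r‖ := ContinuousLinearMap.le_opNorm _ _
        _ ≤ ‖chainComp U (n + 1) k‖ * (θ (n + 1) * ‖z - z'‖) := by gcongr
        _ = _ := by ring

end Network

theorem statement1
    (m : ℕ) (hm : 1 ≤ m)
    (H : ℕ → Type*) [∀ n, NormedAddCommGroup (H n)] [∀ n, InnerProductSpace ℝ (H n)]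
    [∀ n, CompleteSpace (H n)] [∀ n, Nontrivial (H n)]
    -- the identification `H m = H 0`
    (e : H m ≃ₗᵢ[ℝ] H 0)
    (U : ∀ n, H n →L[ℝ] H (n + 1))
    (Q : ∀ n, H n → H n)
    (hQ : ∀ n, 1 ≤ n → n ≤ m → ∀ x y : H n,
      ‖Q n x - Q n y‖ ^ 2 + ‖(x - Q n x) - (y - Q n y)‖ ^ 2 ≤ ‖x - y‖ ^ 2)
    (θ : ℕ → ℝ) (hθ0 : θ 0 = 1)
    (hθ : ∀ n, 1 ≤ n → n ≤ m →
      θ n = ∑ i ∈ Finset.Icc 1 n, θ (i - 1) * ‖chainComp U (i - 1) (n - (i - 1))‖)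
    (α : ℝ) (hα : 1 / 2 ≤ α) (hα1 : α ≤ 1)
    (hcond :
      ‖e.toLinearIsometry.toContinuousLinearMap.comp (chainFull U m)
          - (2 ^ m * (1 - α)) • (1 : H 0 →L[ℝ] H 0)‖
        - ‖e.toLinearIsometry.toContinuousLinearMap.comp (chainFull U m)‖ + 2 * θ m
        ≤ 2 ^ m * α) :
    ∃ Rm : H 0 → H 0,
      (∀ z z' : H 0, ‖Rm z - Rm z'‖ ≤ ‖z - z'‖) ∧
      ∀ z : H 0, e (chainNet U Q m z) = (1 - α) • z + α • Rm z := by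
  have hα0 : 0 < α := by linarith
  refine ⟨fun z => α⁻¹ • (e (chainNet U Q m z) - (1 - α) • z), fun z z' => ?_, fun z => ?_⟩
  swap
  · rw [smul_inv_smul₀ hα0.ne']; abel
  have hE : ‖chainErr U Q z z' m‖ ≤ (2 * θ m - ‖chainFull U m‖) * ‖z - z'‖ := by
    have h : ‖chainErr U Q z z' m‖ ≤
        (∑ j ∈ Finset.range m, θ (j + 1) * ‖chainComp U (j + 1) (m - (j + 1))‖) * ‖z - z'‖ :=
      norm_chainComp_chainErr_le U Q hQ hθ0 hθ z z' m le_rfl 0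
    obtain ⟨n, rfl⟩ : ∃ n, m = n + 1 := ⟨m - 1, by omega⟩
    have hid : ‖chainComp U (n + 1) 0‖ = 1 := ContinuousLinearMap.norm_id
    have hθs := theta_succ U hθ0 hθ le_rfl
    rw [Finset.sum_range_succ, Nat.sub_self, hid] at h
    rw [norm_chainFull]
    refine h.trans_eq ?_
    congr 1
    linarith
  set V := e.toLinearIsometry.toContinuousLinearMap.comp (chainFull U m) with hV
  have hVn : ‖V‖ = ‖chainFull U m‖ := LinearIsometry.norm_toContinuousLinearMap_comp _
  set w := e (chainNet U Q m z) - (1 - α) • z - (e (chainNet U Q m z') - (1 - α) • z') with hw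
  have hkey : (2 ^ m : ℝ) • w =
      (V - (2 ^ m * (1 - α)) • (1 : H 0 →L[ℝ] H 0)) (z - z') + e (chainErr U Q z z' m) := by
    have hVz : V (z - z') = e (chainFull U m (z - z')) := rfl
    have hsub : (V - (2 ^ m * (1 - α)) • (1 : H 0 →L[ℝ] H 0)) (z - z') =
        V (z - z') - (2 ^ m * (1 - α)) • (z - z') := rfl
    rw [hsub, hVz, chainErr, map_sub e, map_smul e, map_sub e (chainNet U Q m z), hw]
    module
  have hbound : (2 ^ m : ℝ) * ‖w‖ ≤ 2 ^ m * (α * ‖z - z'‖) := by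
    calc (2 ^ m : ℝ) * ‖w‖ = ‖(2 ^ m : ℝ) • w‖ := by
          rw [norm_smul, Real.norm_of_nonneg (by positivity)]
      _ ≤ ‖V - (2 ^ m * (1 - α)) • (1 : H 0 →L[ℝ] H 0)‖ * ‖z - z'‖ +
          (2 * θ m - ‖chainFull U m‖) * ‖z - z'‖ := by
          rw [hkey]
          refine (norm_add_le _ _).trans (add_le_add (ContinuousLinearMap.le_opNorm _ _) ?_)
          rwa [e.norm_map]
      _ = (‖V - (2 ^ m * (1 - α)) • (1 : H 0 →L[ℝ] H 0)‖ - ‖V‖ + 2 * θ m) * ‖z - z'‖ := by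
          rw [hVn]; ring
      _ ≤ (2 ^ m * α) * ‖z - z'‖ := by gcongr
      _ = _ := by ring
  have hwα : ‖w‖ ≤ α * ‖z - z'‖ := le_of_mul_le_mul_left hbound (by positivity)
  rw [← smul_sub, norm_smul, Real.norm_of_nonneg (inv_nonneg.2 hα0.le), inv_mul_le_iff₀ hα0]
  exact hwα
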